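/- Let A, A' be objects of A. Then any morphism f : A → A' in K^b(A)/𝔻 can be presented as a composition g ∘ s⁻¹ ∘ i, where A'' and T are objects of A, g ∈ A(A'', A'), s ∈ A(A'', A ⊕ T) with Cone(s) an object of 𝔻, and i : A → A ⊕ T is the canonical coretraction. -/

import Mathlib

open CategoryTheory Limits Pretriangulated ZeroObject

universe v u v' u'

section TriangulatedPrelude

variable {C : Type u} [Category.{v} C] [HasZeroObject C] [HasShift C ℤ] [Preadditive C]
  [∀ n : ℤ, (shiftFunctor C n).Additive] [Pretriangulated C]

/-- The objects of the smallest strict full triangulated subcategory of `C`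
containing the set of objects `B`. -/
inductive genSub (B : Set C) : C → Prop
  | of (X : C) (hX : X ∈ B) : genSub B X
  | zero (X : C) (hX : IsZero X) : genSub B X
  | shift (X : C) (n : ℤ) (hX : genSub B X) : genSub B (X⟦n⟧)
  | ext₂ (T : Triangle C) (hT : T ∈ distTriang C) (h₁ : genSub B T.obj₁)
      (h₃ : genSub B T.obj₃) : genSub B T.obj₂

/-- The triangulated subcategory of `C` generated by `B`. -/
def genSubcat (B : Set C) : ObjectProperty C :=
  genSub B

instance (B : Set C) : (genSubcat B).IsTriangulated where
  exists_zero := ⟨0, isZero_zero _, genSub.zero _ (isZero_zero _)⟩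
  isStableUnderShiftBy n := ⟨fun X h => genSub.shift X n h⟩
  ext₂' T hT h₁ h₃ := ObjectProperty.le_isoClosure _ _ (genSub.ext₂ T hT h₁ h₃)

/-- The extension-closure of a class of objects `E`: the smallest class containing `E`
and `0` and such that for any distinguished triangle `X ⟶ Y ⟶ Z` with `X, Z` in the
class, `Y` is also in the class. -/
inductive extClosure (E : Set C) : C → Prop
  | of (X : C) (hX : X ∈ E) : extClosure E X
  | zero (X : C) (hX : IsZero X) : extClosure E X
  | ext₂ (T : Triangle C) (hT : T ∈ distTriang C) (h₁ : extClosure E T.obj₁)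
      (h₃ : extClosure E T.obj₃) : extClosure E T.obj₂

/-- `D_{[i,j]}`: the extension-closure of `∪_{i ≤ l ≤ j} D[l]`. -/
def shiftClosure (D : Set C) (i j : ℤ) : Set C :=
  extClosure {X | ∃ (Y : C) (l : ℤ), i ≤ l ∧ l ≤ j ∧ Y ∈ D ∧ X = Y⟦l⟧}

/-- `D_{≥ i} = ∪_{k ≥ i} D_{[i,k]}`. -/
def shiftClosureGE (D : Set C) (i : ℤ) : Set C := {X | ∃ k, i ≤ k ∧ X ∈ shiftClosure D i k}

/-- `D_{≤ j} = ∪_{k ≤ j} D_{[k,j]}`. -/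
def shiftClosureLE (D : Set C) (j : ℤ) : Set C := {X | ∃ k, k ≤ j ∧ X ∈ shiftClosure D k j}

/-- A set of objects `D` is weakly negative if `0 ∈ D` and `Hom(X, Y[i]) = 0`
for all `X, Y ∈ D` and all `i ≥ 2`. -/
def WeaklyNegative (D : Set C) : Prop :=
  (0 : C) ∈ D ∧ ∀ X ∈ D, ∀ Y ∈ D, ∀ i : ℤ, 2 ≤ i → ∀ f : X ⟶ (Y⟦i⟧), f = 0

end TriangulatedPrelude

attribute [local instance] Limits.hasBinaryBiproducts_of_finite_biproducts

section KPrelude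

variable {A : Type u} [Category.{v} A] [Preadditive A] [HasZeroObject A] [HasFiniteBiproducts A]

/-- The two-term cochain complex with `P` in degree `n` and `Q` in degree `n + 1`,
with differential given by `f : P ⟶ Q` (and all other terms `0`).
In particular, `twoComplex (-1) f` is the cone of a morphism `f` of `A`. -/
noncomputable def twoComplex (n : ℤ) {P Q : A} (f : P ⟶ Q) : CochainComplex A ℤ where
  X i := if i = n then P else if i = n + 1 then Q else 0
  d i j :=
    if hij : i = n ∧ j = n + 1 then
      eqToHom (by simp [hij.1]) ≫ f ≫
        eqToHom (by simp [hij.2, show ¬ ((n : ℤ) + 1 = n) by omega])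
    else 0
  shape i j hij := by
    rw [dif_neg]
    rintro ⟨rfl, rfl⟩
    exact hij rfl
  d_comp_d' i j k _ _ := by
    by_cases h1 : i = n ∧ j = n + 1
    · by_cases h2 : j = n ∧ k = n + 1
      · obtain ⟨h1a, h1b⟩ := h1; obtain ⟨h2a, h2b⟩ := h2; omega
      · rw [dif_neg h2, comp_zero]
    · rw [dif_neg h1, zero_comp]

/-- The chain map from the two-term complex (in degrees `n`, `n + 1`) determined by
`f : P ⟶ Q` to the complex concentrated in degree `n` with value `M`, whose degree `n`
component is `g : P ⟶ M`. -/
noncomputable def twoComplexToSingle (n : ℤ) {P Q M : A} (f : P ⟶ Q) (g : P ⟶ M) :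
    twoComplex n f ⟶ (HomologicalComplex.single A (ComplexShape.up ℤ) n).obj M where
  f i :=
    if h : i = n then
      eqToHom (by simp [twoComplex, h]) ≫ g ≫
        (HomologicalComplex.singleObjXSelf (ComplexShape.up ℤ) n M).inv ≫ eqToHom (by rw [h])
    else 0
  comm' i j hij := by
    simp only [ComplexShape.up_Rel] at hij
    by_cases hj : j = n
    · have hi : ¬ (i = n ∧ j = n + 1) := by rintro ⟨rfl, rfl⟩; omega
      have hd : (twoComplex n f).d i j = 0 := by
        exact dif_neg hi
      rw [hd, zero_comp]
      have : i ≠ n := by omega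
      rw [dif_neg this, zero_comp]
    · rw [dif_neg hj]
      rw [comp_zero]
      have : ((HomologicalComplex.single A (ComplexShape.up ℤ) n).obj M).d i j = 0 := by simp
      rw [this, comp_zero]

/-- The quotient functor `C^b(A) ⥤ K(A)` (restricted from all complexes). -/
noncomputable abbrev homotopyQ : CochainComplex A ℤ ⥤ HomotopyCategory A (ComplexShape.up ℤ) :=
  HomotopyCategory.quotient A (ComplexShape.up ℤ)

/-- The canonical embedding of `A` into the homotopy category, as complexes concentrated
in degree `0`. -/
noncomputable abbrev iotaA : A ⥤ HomotopyCategory A (ComplexShape.up ℤ) :=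
  HomologicalComplex.single A (ComplexShape.up ℤ) 0 ⋙ homotopyQ

/-- `B`: the set of cones of elements of `S`, viewed in the homotopy category. -/
def coneSet (S : MorphismProperty A) : Set (HomotopyCategory A (ComplexShape.up ℤ)) :=
  {X | ∃ (P Q : A) (s : P ⟶ Q), S s ∧ X = homotopyQ.obj (twoComplex (-1) s)}

/-- The Verdier localization functor of the homotopy category by the triangulated
subcategory `𝔻` generated by the cones of elements of `S`. -/
noncomputable abbrev locQ (S : MorphismProperty A) :
    HomotopyCategory A (ComplexShape.up ℤ) ⥤ (genSubcat (coneSet S)).trW.Localization :=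
  (genSubcat (coneSet S)).trW.Q

/-- The composite functor `A ⥤ K(A) ⥤ K(A)/𝔻`. -/
noncomputable abbrev uBig (S : MorphismProperty A) :
    A ⥤ (genSubcat (coneSet S)).trW.Localization :=
  iotaA ⋙ locQ S

/-- `A[S⁻¹]_add`: the full subcategory of the Verdier quotient whose
objects are those of `A` (viewed as complexes concentrated in degree `0`). -/
def AddLoc (S : MorphismProperty A) : Type u := A

noncomputable instance (S : MorphismProperty A) : Category (AddLoc S) where
  Hom X Y := (uBig S).obj X ⟶ (uBig S).obj Y
  id X := 𝟙 ((uBig S).obj X)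
  comp f g := f ≫ g

/-- The canonical functor `u : A ⥤ A[S⁻¹]_add` induced by the localization functor. -/
noncomputable def uFun (S : MorphismProperty A) : A ⥤ AddLoc S where
  obj X := X
  map f := (uBig S).map f
  map_id X := (uBig S).map_id X
  map_comp f g := (uBig S).map_comp f g

noncomputable instance (S : MorphismProperty A) : Preadditive (AddLoc S) where
  homGroup X Y := inferInstanceAs (AddCommGroup ((uBig S).obj X ⟶ (uBig S).obj Y))
  add_comp P Q R f f' g :=
    @Preadditive.add_comp _ _ _ ((uBig S).obj P) ((uBig S).obj Q) ((uBig S).obj R) f f' g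
  comp_add P Q R f g g' :=
    @Preadditive.comp_add _ _ _ ((uBig S).obj P) ((uBig S).obj Q) ((uBig S).obj R) f g g'

end KPrelude

section Helpers
open ObjectProperty
section
variable {C : Type u} [Category.{v} C] [HasZeroObject C] [HasShift C ℤ] [Preadditive C]
  [∀ n : ℤ, (shiftFunctor C n).Additive] [Pretriangulated C]

lemma extClosure_iso {E : Set C} {X Y : C} (e : X ≅ Y) (h : extClosure E X) : extClosure E Y := by
  have h1 := contractible_distinguished X
  exact extClosure.ext₂ (Triangle.mk e.hom (0 : Y ⟶ 0) 0)
    (isomorphic_distinguished _ h1 _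
      (Triangle.isoMk _ _ (Iso.refl _) e.symm (Iso.refl _)
        (show e.hom ≫ e.inv = 𝟙 X ≫ 𝟙 X by simp)
        (show (0 : Y ⟶ 0) ≫ 𝟙 _ = e.inv ≫ (0 : X ⟶ 0) by simp)
        (zero_comp.trans comp_zero.symm))) h
    (extClosure.zero _ (isZero_zero _))

lemma genSub_iso {E : Set C} {X Y : C} (e : X ≅ Y) (h : genSub E X) : genSub E Y := by
  have h1 := contractible_distinguished X
  exact genSub.ext₂ (Triangle.mk e.hom (0 : Y ⟶ 0) 0)
    (isomorphic_distinguished _ h1 _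
      (Triangle.isoMk _ _ (Iso.refl _) e.symm (Iso.refl _)
        (show e.hom ≫ e.inv = 𝟙 X ≫ 𝟙 X by simp)
        (show (0 : Y ⟶ 0) ≫ 𝟙 _ = e.inv ≫ (0 : X ⟶ 0) by simp)
        (zero_comp.trans comp_zero.symm))) h
    (genSub.zero _ (isZero_zero _))

lemma ep_swap (F G : ObjectProperty C)
    (hFG : ∀ X Y, F X → G Y → ∀ f : X ⟶ Y⟦(1 : ℤ)⟧, f = 0) :
    extensionProduct G F ≤ extensionProduct F G := by
  rintro X ⟨Y, Z, f, g, h, hT, hY, hZ⟩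
  obtain ⟨e, -, -⟩ := exists_iso_binaryBiproduct_of_distTriang _ hT (hFG _ _ hZ hY h)
  refine prop_of_iso _ (e ≪≫ biprod.braiding _ _).symm ?_
  exact ⟨_, _, _, _, _, binaryBiproductTriangle_distinguished Z Y, hZ, hY⟩

lemma ep_dec [IsTriangulated C] (F G : ObjectProperty C) (hF : extensionProduct F F ≤ F)
    (hG : extensionProduct G G ≤ G)
    (hFG : ∀ X Y, F X → G Y → ∀ f : X ⟶ Y⟦(1 : ℤ)⟧, f = 0) :
    extensionProduct (extensionProduct F G) (extensionProduct F G) ≤ extensionProduct F G := by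
  rw [extensionProduct_assoc, ← extensionProduct_assoc G F G]
  refine (monotone_extensionProduct_right _ (monotone_extensionProduct_left _ 
    (ep_swap F G hFG))).trans ?_
  rw [extensionProduct_assoc F G G, ← extensionProduct_assoc F F]
  exact (monotone_extensionProduct_left _ hF).trans (monotone_extensionProduct_right _ hG)

/-- ext closure as object property -/
def extP (E : Set C) : ObjectProperty C := extClosure E

lemma extP_ep (E : Set C) : extensionProduct (extP E) (extP E) ≤ extP E := by
  rintro X ⟨Y, Z, f, g, h, hT, hY, hZ⟩
  exact extClosure.ext₂ _ hT hY hZ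

lemma extP_le (E : Set C) (P : ObjectProperty C) (hE : ∀ X ∈ E, P X) (h0 : ∀ X, IsZero X → P X)
    (hP : extensionProduct P P ≤ P) : extP E ≤ P := by
  intro X hX
  induction hX with
  | of X h => exact hE X h
  | zero X h => exact h0 X h
  | ext₂ T hT _ _ h1 h3 => exact hP _ ⟨_, _, _, _, _, hT, h1, h3⟩

lemma hom_from_extP (E : Set C) (Y : C) (hE : ∀ X ∈ E, ∀ f : X ⟶ Y, f = 0) (X : C)
    (hX : extP E X) (f : X ⟶ Y) : f = 0 := by
  refine extP_le E (fun X => ∀ f : X ⟶ Y, f = 0) hE (fun X h f => h.eq_of_src _ _) ?_ X hX f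
  rintro X ⟨Y, Z, a, g, h, hT, hY, hZ⟩ f
  obtain ⟨k, hk⟩ := Triangle.yoneda_exact₂ _ hT f (hY _)
  rw [hk, show k = 0 from hZ k]
  exact comp_zero

lemma hom_to_extP (E : Set C) (W : C) (hE : ∀ X ∈ E, ∀ f : W ⟶ X, f = 0) (X : C)
    (hX : extP E X) (f : W ⟶ X) : f = 0 := by
  refine extP_le E (fun X => ∀ f : W ⟶ X, f = 0) hE (fun X h f => h.eq_of_tgt _ _) ?_ X hX f
  rintro X ⟨Y, Z, a, g, h, hT, hY, hZ⟩ f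
  obtain ⟨k, hk⟩ := Triangle.coyoneda_exact₂ _ hT f (hZ _)
  rw [hk, show k = 0 from hY k]
  exact zero_comp

lemma hom_to_extP_shift (E : Set C) (W : C) (n : ℤ) (hE : ∀ X ∈ E, ∀ f : W ⟶ X⟦n⟧, f = 0) (X : C)
    (hX : extP E X) (f : W ⟶ X⟦n⟧) : f = 0 := by
  refine extP_le E (fun X => ∀ f : W ⟶ X⟦n⟧, f = 0) hE
    (fun X h f => ((shiftFunctor C n).map_isZero h).eq_of_tgt _ _) ?_ X hX f
  rintro X ⟨Y, Z, a, g, h, hT, hY, hZ⟩ f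
  obtain ⟨k, hk⟩ := Triangle.coyoneda_exact₂ _ (Triangle.shift_distinguished _ hT n) f (hZ _)
  rw [hk, show k = 0 from hY k]
  exact zero_comp

lemma extP_split [IsTriangulated C] (E E₁ E₂ : Set C) (h : E ⊆ E₁ ∪ E₂)
    (h12 : ∀ X ∈ E₁, ∀ Y ∈ E₂, ∀ f : X ⟶ Y⟦(1 : ℤ)⟧, f = 0) :
    extP E ≤ extensionProduct (extP E₁) (extP E₂) := by
  have h0 : ∀ X : C, IsZero X → extensionProduct (extP E₁) (extP E₂) X := fun X hX =>
    ⟨_, _, _, _, _, contractible_distinguished X, extClosure.zero _ hX,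
      extClosure.zero _ (isZero_zero _)⟩
  refine extP_le _ _ ?_ h0 (ep_dec _ _ (extP_ep _) (extP_ep _) ?_)
  · intro X hX
    rcases h hX with h1 | h1
    · exact ⟨_, _, _, _, _, contractible_distinguished X, extClosure.of _ h1,
        extClosure.zero _ (isZero_zero _)⟩
    · exact ⟨_, _, _, _, _, contractible_distinguished₁ X, 
        extClosure.zero _ (isZero_zero _), extClosure.of _ h1⟩
  · intro X Y hX hY f
    exact hom_from_extP E₁ _ (fun X hX f => hom_to_extP_shift E₂ X 1 (fun Y hY f => 
      h12 X hX Y hY f) Y hY f) X hX f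

/-- shifts of `B` by integers satisfying `p` -/
def shSet (B : Set C) (p : ℤ → Prop) : Set C := {X | ∃ Y ∈ B, ∃ l, p l ∧ Nonempty (X ≅ Y⟦l⟧)}

lemma extP_le_genSub (B : Set C) (p : ℤ → Prop) : extP (shSet B p) ≤ genSubcat B := by
  refine extP_le _ _ ?_ (fun X h => genSub.zero X h) ?_
  · rintro X ⟨Y, hY, l, -, ⟨e⟩⟩
    exact genSub_iso e.symm (genSub.shift _ _ (genSub.of _ hY))
  · rintro X ⟨Y, Z, f, g, h, hT, hY, hZ⟩
    exact genSub.ext₂ _ hT hY hZ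

lemma extP_shift (B : Set C) (n : ℤ) (X : C) (h : extP (shSet B (fun _ => True)) X) :
    extP (shSet B (fun _ => True)) (X⟦n⟧) := by
  refine extP_le _ (fun X => extP (shSet B (fun _ => True)) (X⟦n⟧)) ?_ ?_ ?_ X h
  · rintro X ⟨Y, hY, l, -, ⟨e⟩⟩
    exact extClosure.of _ ⟨Y, hY, l + n, trivial,
      ⟨(shiftFunctor C n).mapIso e ≪≫ (shiftFunctorAdd C l n).symm.app Y⟩⟩
  · intro X hX
    exact extClosure.zero _ ((shiftFunctor C n).map_isZero hX)
  · rintro X ⟨Y, Z, f, g, h, hT, hY, hZ⟩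
    exact extClosure.ext₂ _ (Triangle.shift_distinguished _ hT n) hY hZ

lemma genSub_le_extP (B : Set C) (X : C) (h : genSub B X) : extP (shSet B (fun _ => True)) X := by
  induction h with
  | of X h => exact extClosure.of _ ⟨X, h, 0, trivial, ⟨((shiftFunctorZero C ℤ).app X).symm⟩⟩
  | zero X h => exact extClosure.zero _ h
  | shift X n _ h => exact extP_shift B n X h
  | ext₂ T hT _ _ h1 h3 => exact extClosure.ext₂ _ hT h1 h3
end

set_option linter.unusedSectionVars false
section
variable {C : Type u} [Category.{v} C] [HasZeroObject C] [HasShift C ℤ] [Preadditive C]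
  [∀ n : ℤ, (shiftFunctor C n).Additive] [Pretriangulated C]

lemma ex_lift {X Y Z W : C} {f : X ⟶ Y} {g : Y ⟶ Z} {h : Z ⟶ X⟦(1 : ℤ)⟧}
    (hT : Triangle.mk f g h ∈ distTriang C) (a : W ⟶ Y) (ha : a ≫ g = 0) :
    ∃ b : W ⟶ X, b ≫ f = a := by
  obtain ⟨b, hb⟩ := Triangle.coyoneda_exact₂ _ hT a ha
  exact ⟨b, hb.symm⟩

lemma ex_desc {X Y Z W : C} {f : X ⟶ Y} {g : Y ⟶ Z} {h : Z ⟶ X⟦(1 : ℤ)⟧}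
    (hT : Triangle.mk f g h ∈ distTriang C) (a : Y ⟶ W) (ha : f ≫ a = 0) :
    ∃ b : Z ⟶ W, g ≫ b = a := by
  obtain ⟨b, hb⟩ := Triangle.yoneda_exact₂ _ hT a ha
  exact ⟨b, hb.symm⟩

lemma ex_desc₃ {X Y Z W : C} {f : X ⟶ Y} {g : Y ⟶ Z} {h : Z ⟶ X⟦(1 : ℤ)⟧}
    (hT : Triangle.mk f g h ∈ distTriang C) (a : Z ⟶ W) (ha : g ≫ a = 0) :
    ∃ b : X⟦(1 : ℤ)⟧ ⟶ W, h ≫ b = a := by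
  obtain ⟨b, hb⟩ := Triangle.yoneda_exact₃ _ hT a ha
  exact ⟨b, hb.symm⟩

lemma ex_desc₁ {X Y Z W : C} {f : X ⟶ Y} {g : Y ⟶ Z} {h : Z ⟶ X⟦(1 : ℤ)⟧}
    (hT : Triangle.mk f g h ∈ distTriang C) (a : X ⟶ W) (ha : h ≫ a⟦(1 : ℤ)⟧' = 0) :
    ∃ b : Y ⟶ W, f ≫ b = a := by
  obtain ⟨b, hb⟩ := ex_desc (rot_of_distTriang _ (rot_of_distTriang _ hT)) (a⟦(1 : ℤ)⟧') ha
  obtain ⟨b', hb'⟩ := (shiftFunctor C (1 : ℤ)).map_surjective (X := Y) b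
  have hb2 : (-(f⟦(1 : ℤ)⟧')) ≫ b'⟦(1 : ℤ)⟧' = a⟦(1 : ℤ)⟧' := by
    rw [hb']; exact hb
  refine ⟨-b', (shiftFunctor C (1 : ℤ)).map_injective ?_⟩
  rw [← hb2]
  simp

lemma ex_mor₁ {X Y Z X' Y' Z' : C} {f : X ⟶ Y} {g : Y ⟶ Z} {h : Z ⟶ X⟦(1 : ℤ)⟧}
    {f' : X' ⟶ Y'} {g' : Y' ⟶ Z'} {h' : Z' ⟶ X'⟦(1 : ℤ)⟧}
    (hT : Triangle.mk f g h ∈ distTriang C) (hT' : Triangle.mk f' g' h' ∈ distTriang C)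
    (b : Y ⟶ Y') (c : Z ⟶ Z') (comm : g ≫ c = b ≫ g') :
    ∃ a : X ⟶ X', f ≫ b = a ≫ f' ∧ h ≫ a⟦(1 : ℤ)⟧' = c ≫ h' :=
  complete_distinguished_triangle_morphism₁ _ _ hT hT' b c comm

variable {A : Type u'} [Category.{v'} A] [Preadditive A] [HasFiniteBiproducts A]
  (ι : A ⥤ C) [ι.Additive] [ι.Full]

lemma pbb : PreservesBinaryBiproducts ι := 
  have := Functor.preservesFiniteBiproductsOfAdditive ι
  preservesBinaryBiproducts_of_preservesBiproducts ι

/-- objects isomorphic to `ι P ⟦n⟧` -/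
def shP (n : ℤ) : ObjectProperty C := fun X => ∃ P : A, Nonempty (X ≅ (ι.obj P)⟦n⟧)

lemma shP_ep (h1 : ∀ (P Q : A) (f : ι.obj P ⟶ (ι.obj Q)⟦(1 : ℤ)⟧), f = 0) (n : ℤ) :
    extensionProduct (shP ι n) (shP ι n) ≤ shP ι n := by
  rintro X ⟨Y, Z, f, g, h, hT, ⟨P, ⟨eP⟩⟩, ⟨Q, ⟨eQ⟩⟩⟩
  have hz : h = 0 := by
    let e1 : ((ι.obj P)⟦n⟧)⟦(1 : ℤ)⟧ ≅ ((ι.obj P)⟦(1 : ℤ)⟧)⟦n⟧ := shiftComm _ _ _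
    obtain ⟨k, hk⟩ := (shiftFunctor C n).map_surjective (eQ.inv ≫ h ≫ eP.hom⟦(1 : ℤ)⟧' ≫ e1.hom)
    rw [h1 _ _ k, Functor.map_zero, eq_comm, Iso.inv_comp_eq, comp_zero, ← Category.assoc, 
      ← Iso.eq_comp_inv, zero_comp] at hk
    rw [← cancel_mono (eP.hom⟦(1 : ℤ)⟧'), hk, zero_comp]
  obtain ⟨e, -, -⟩ := exists_iso_binaryBiproduct_of_distTriang _ hT hz
  have : PreservesBinaryBiproducts (ι ⋙ shiftFunctor C n) := pbb _
  exact ⟨P ⊞ Q, ⟨e ≪≫ biprod.mapIso eP eQ ≪≫ ((ι ⋙ shiftFunctor C n).mapBiprod P Q).symm⟩⟩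

/-- two-term objects -/
def twoP : ObjectProperty C := fun D => ∃ (P Q : A) (d : P ⟶ Q) (j : ι.obj Q ⟶ D) 
  (q : D ⟶ (ι.obj P)⟦(1 : ℤ)⟧), Triangle.mk (ι.map d) j q ∈ distTriang C

lemma twoP_eq : twoP ι = extensionProduct (shP ι 0) (shP ι 1) := by
  ext D
  constructor
  · rintro ⟨P, Q, d, j, q, hT⟩
    exact ⟨_, _, _, _, _, rot_of_distTriang _ hT, ⟨Q, ⟨((shiftFunctorZero C ℤ).app _).symm⟩⟩, 
      ⟨P, ⟨Iso.refl _⟩⟩⟩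
  · rintro ⟨Y, Z, f, g, h, hT, ⟨Q, ⟨eQ⟩⟩, ⟨P, ⟨eP⟩⟩⟩
    let e' : ι.obj Q ≅ Y := ((shiftFunctorZero C ℤ).app _).symm ≪≫ eQ.symm
    obtain ⟨k, hk⟩ := (ι ⋙ shiftFunctor C (1 : ℤ)).map_surjective (-(eP.inv ≫ h ≫ e'.inv⟦(1 : ℤ)⟧'))
    refine ⟨P, Q, k, e'.hom ≫ f, g ≫ eP.hom, ?_⟩
    rw [rotate_distinguished_triangle]
    refine isomorphic_distinguished _ hT _ (Triangle.isoMk _ _ e' (Iso.refl _) eP.symm ?_ ?_ ?_)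
    · exact Category.comp_id _
    · change (g ≫ eP.hom) ≫ eP.inv = 𝟙 _ ≫ g
      simp
    · change (- (ι ⋙ shiftFunctor C (1 : ℤ)).map k) ≫ e'.hom⟦(1 : ℤ)⟧' = eP.inv ≫ h
      rw [hk]
      simp [← Functor.map_comp]

lemma twoP_ep [IsTriangulated C]
    (h1 : ∀ (P Q : A) (f : ι.obj P ⟶ (ι.obj Q)⟦(1 : ℤ)⟧), f = 0)
    (h2 : ∀ (P Q : A) (f : ι.obj P ⟶ (ι.obj Q)⟦(2 : ℤ)⟧), f = 0) :
    extensionProduct (twoP ι) (twoP ι) ≤ twoP ι := by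
  rw [twoP_eq]
  refine ep_dec _ _ (shP_ep ι h1 0) (shP_ep ι h1 1) ?_
  rintro X Y ⟨P, ⟨eP⟩⟩ ⟨Q, ⟨eQ⟩⟩ f
  let eP' : X ≅ ι.obj P := eP ≪≫ (shiftFunctorZero C ℤ).app _
  let eQ' : Y⟦(1 : ℤ)⟧ ≅ (ι.obj Q)⟦(2 : ℤ)⟧ := (shiftFunctor C (1 : ℤ)).mapIso eQ ≪≫ 
    ((shiftFunctorAdd' C (1 : ℤ) 1 2 (by norm_num)).symm.app _)
  have := h2 _ _ (eP'.inv ≫ f ≫ eQ'.hom)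
  rw [Iso.inv_comp_eq, comp_zero, ← Iso.eq_comp_inv, zero_comp] at this
  exact this

lemma twoP_zero [HasZeroObject A] (X : C) (hX : IsZero X) : twoP ι X := by
  rw [twoP_eq]
  have h0 : ∀ n, shP ι n (0 : C) := fun n => 
    ⟨0, ⟨IsZero.iso (isZero_zero _) ((ι ⋙ shiftFunctor C n).map_isZero (isZero_zero _))⟩⟩
  exact ⟨_, _, _, _, _, isomorphic_distinguished _ (contractible_distinguished 0)
    (Triangle.mk (0 : (0 : C) ⟶ X) (0 : X ⟶ (0 : C)) 0) 
    (Triangle.isoMk _ _ (Iso.refl _) (hX.iso (isZero_zero _)) (Iso.refl _) 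
      (IsZero.eq_of_src (isZero_zero _) _ _) (IsZero.eq_of_src hX _ _) 
      (IsZero.eq_of_src (isZero_zero _) _ _)), h0 0, h0 1⟩

lemma trW_biprod (P : ObjectProperty C) [P.IsTriangulated] (X : A) {Y Z : A} (d : Y ⟶ Z)
    (hd : P.trW (ι.map d)) : P.trW (ι.map (biprod.map (𝟙 X) d)) := by
  have : PreservesBinaryBiproducts ι := pbb _
  have h : P.trW.IsStableUnderProductsOfShape WalkingPair := inferInstance
  refine h.condition (pair (ι.obj X) (ι.obj Y)) (pair (ι.obj X) (ι.obj Z)) 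
    (ι.mapBinaryBicone (BinaryBiproduct.bicone X Y)).toCone
    (ι.mapBinaryBicone (BinaryBiproduct.bicone X Z)).toCone
    (isBinaryBilimitOfPreserves ι (BinaryBiproduct.isBilimit X Y)).isLimit
    (isBinaryBilimitOfPreserves ι (BinaryBiproduct.isBilimit X Z)).isLimit
    (mapPair (𝟙 _) (ι.map d)) ?_ _ ?_
  · rintro ⟨_ | _⟩
    · exact trW_of_isIso P (𝟙 (ι.obj X))
    · exact hd
  · rintro ⟨_ | _⟩
    · change ι.map _ ≫ ι.map biprod.fst = ι.map biprod.fst ≫ 𝟙 _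
      simp [← Functor.map_comp]
    · change ι.map _ ≫ ι.map biprod.snd = ι.map biprod.snd ≫ ι.map d
      simp [← Functor.map_comp]
end

section
variable {C : Type u} [Category.{v} C] [HasZeroObject C] [HasShift C ℤ] [Preadditive C]
  [∀ n : ℤ, (shiftFunctor C n).Additive] [Pretriangulated C]
variable {A : Type u'} [Category.{v'} A] [Preadditive A] [HasFiniteBiproducts A]
  (ι : A ⥤ C) [ι.Additive] [ι.Full]

lemma shSet_neg [IsTriangulated C] (B : Set C)
    (hneg : ∀ X ∈ B, ∀ Y ∈ B, ∀ l m : ℤ, l + 2 ≤ m → ∀ f : X⟦l⟧ ⟶ Y⟦m⟧, f = 0)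
    (p q : ℤ → Prop) (hpq : ∀ l m, p l → q m → l < m) :
    ∀ X ∈ shSet B p, ∀ Y ∈ shSet B q, ∀ f : X ⟶ Y⟦(1 : ℤ)⟧, f = 0 := by
  rintro X ⟨X', hX', l, hl, ⟨e⟩⟩ Y ⟨Y', hY', m, hm, ⟨e'⟩⟩ f
  let e'' : Y⟦(1 : ℤ)⟧ ≅ Y'⟦m + 1⟧ := (shiftFunctor C (1 : ℤ)).mapIso e' ≪≫ 
    (shiftFunctorAdd C m 1).symm.app _
  have := hneg _ hX' _ hY' l (m + 1) (by have := hpq l m hl hm; omega) (e.inv ≫ f ≫ e''.hom)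
  rw [Iso.inv_comp_eq, comp_zero, ← Iso.eq_comp_inv, zero_comp] at this
  exact this

theorem main_abs [IsTriangulated C] [HasZeroObject A] (B : Set C)
    (h1 : ∀ (P Q : A) (f : ι.obj P ⟶ (ι.obj Q)⟦(1 : ℤ)⟧), f = 0)
    (h2 : ∀ (P Q : A) (f : ι.obj P ⟶ (ι.obj Q)⟦(2 : ℤ)⟧), f = 0)
    (hB : ∀ X ∈ B, twoP ι X)
    (hneg : ∀ X ∈ B, ∀ Y ∈ B, ∀ l m : ℤ, l + 2 ≤ m → ∀ f : X⟦l⟧ ⟶ Y⟦m⟧, f = 0)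
    (hR : ∀ P : A, ∀ X ∈ B, ∀ m : ℤ, 1 ≤ m → ∀ f : ι.obj P ⟶ X⟦m⟧, f = 0)
    (hL : ∀ P : A, ∀ X ∈ B, ∀ m : ℤ, m ≤ -1 → ∀ f : X⟦m⟧ ⟶ (ι.obj P)⟦(1 : ℤ)⟧, f = 0)
    (A₀ A' : A) (φ : (genSubcat B).trW.Q.obj (ι.obj A₀) ⟶ (genSubcat B).trW.Q.obj (ι.obj A')) :
    ∃ (A'' T : A) (g : A'' ⟶ A') (s : A'' ⟶ A₀ ⊞ T), (genSubcat B).trW (ι.map s) ∧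
      ∃ e, (genSubcat B).trW.Q.map (ι.map s) ≫ e = (genSubcat B).trW.Q.map (ι.map g) ∧
        φ = (genSubcat B).trW.Q.map (ι.map (biprod.inl : A₀ ⟶ A₀ ⊞ T)) ≫ e := by
  obtain ⟨ψ, hψ⟩ := Localization.exists_rightFraction (genSubcat B).trW.Q (genSubcat B).trW φ
  have hψ' : (genSubcat B).trW.Q.map ψ.s ≫ φ = (genSubcat B).trW.Q.map ψ.f := by
    rw [hψ, MorphismProperty.RightFraction.map_s_comp_map]
  obtain @⟨X, p, hp, h⟩ := ψ
  dsimp at X p hp h hψ'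
  clear hψ
  obtain ⟨D, α, δ, hT, hD⟩ := hp
  -- first reduction
  obtain ⟨D₁, R, i, r, w, hT₁, hD₁, hR'⟩ := extP_split (shSet B fun _ => True)
    (shSet B (fun n => n ≤ 0)) (shSet B (fun n => 1 ≤ n)) (by
      rintro X ⟨Y, hY, l, -, e⟩
      rcases le_or_gt l 0 with hl | hl
      · exact Or.inl ⟨Y, hY, l, hl, e⟩
      · exact Or.inr ⟨Y, hY, l, by omega, e⟩)
    (shSet_neg B hneg _ _ (by intros; omega)) D (genSub_le_extP B D hD)
  obtain ⟨α₁, hα₁⟩ := ex_lift hT₁ α (hom_to_extP _ _ (by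
    rintro X ⟨Y, hY, l, hl, ⟨e⟩⟩ f
    rw [← cancel_mono e.hom, zero_comp]
    exact hR _ _ hY _ hl _) _ hR' _)
  obtain ⟨X₁, p₁, δ₁, hT₂⟩ := distinguished_cocone_triangle₁ α₁
  obtain ⟨k, hk, -⟩ := ex_mor₁ hT₂ hT (𝟙 _) i (by rw [hα₁, Category.id_comp])
  rw [Category.comp_id] at hk
  have hp₁ : (genSubcat B).trW p₁ := ⟨D₁, α₁, δ₁, hT₂, extP_le_genSub _ _ _ hD₁⟩
  have hφ : (genSubcat B).trW.Q.map p₁ ≫ φ = (genSubcat B).trW.Q.map (k ≫ h) := by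
    rw [hk, (genSubcat B).trW.Q.map_comp, Category.assoc, hψ', (genSubcat B).trW.Q.map_comp]
  generalize k ≫ h = h' at hφ
  -- second reduction
  obtain ⟨L, D₀, i₀, π, w₀, hT₃, hL', hD₀⟩ := extP_split (shSet B (fun n => n ≤ 0))
    (shSet B (fun n => n ≤ -1)) (shSet B (fun n => n = 0)) (by
      rintro X ⟨Y, hY, l, hl, e⟩
      rcases hl.lt_or_eq with hl | hl
      · exact Or.inl ⟨Y, hY, l, by omega, e⟩
      · exact Or.inr ⟨Y, hY, l, hl, e⟩)
    (shSet_neg B hneg _ _ (by intros; omega)) D₁ hD₁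
  obtain ⟨ρ, hρ⟩ := ex_desc hT₃ (δ₁ ≫ h'⟦(1 : ℤ)⟧') (hom_from_extP _ _ (by
    rintro X ⟨Y, hY, l, hl, ⟨e⟩⟩ f
    rw [← cancel_epi e.inv, comp_zero]
    exact hL _ _ hY _ hl _) _ hL' _)
  have hD₀' : genSub B D₀ := extP_le_genSub _ _ _ hD₀
  have htwo : twoP ι D₀ := by
    refine extP_le _ _ ?_ (twoP_zero ι) (twoP_ep ι h1 h2) _ hD₀
    rintro X ⟨Y, hY, l, rfl, ⟨e⟩⟩
    have := hB Y hY
    rw [twoP_eq] at this ⊢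
    exact prop_of_iso _ (e ≪≫ (shiftFunctorZero C ℤ).app _).symm this
  obtain ⟨P, Q, d, j, q, hT₄⟩ := htwo
  obtain ⟨gP, hgP⟩ := ex_desc₃ hT₄ ρ (h1 _ _ _)
  obtain ⟨gP, rfl⟩ := (ι ⋙ shiftFunctor C (1 : ℤ)).map_surjective gP
  obtain ⟨a, ha⟩ := ex_lift (rot_of_distTriang _ hT₄) (α₁ ≫ π) (h1 _ _ _)
  obtain ⟨a, rfl⟩ := ι.map_surjective (X := A₀) (Y := Q) a
  obtain ⟨b, hb, hb'⟩ := ex_mor₁ hT₂ hT₄ (ι.map a) π ha.symm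
  obtain ⟨gA, hgA⟩ := ex_desc₁ hT₂ (h' - b ≫ ι.map gP) (by
    rw [Functor.map_sub, Functor.map_comp, Preadditive.comp_sub, ← Category.assoc, hb', 
      Category.assoc, ← hρ, ← hgP]
    exact sub_self _)
  obtain ⟨gA, rfl⟩ := ι.map_surjective gA
  -- construction
  let s : A₀ ⊞ P ⟶ A₀ ⊞ Q := biprod.map (𝟙 _) d ≫ (Biprod.unipotentUpper a).hom
  have hs : (genSubcat B).trW (ι.map s) := by
    have : (genSubcat B).trW (ι.map d) := ⟨_, _, _, hT₄, hD₀'⟩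
    simp only [s, ι.map_comp]
    exact MorphismProperty.comp_mem _ _ _ (trW_biprod ι _ A₀ d this) (trW_of_isIso _ _)
  let g : A₀ ⊞ P ⟶ A' := biprod.desc gA (-gP)
  let x : X₁ ⟶ ι.obj (A₀ ⊞ P) := p₁ ≫ ι.map biprod.inl - b ≫ ι.map biprod.inr
  have e1 : biprod.inl ≫ s = biprod.inl + a ≫ biprod.inr := by
    ext <;> simp [s, Biprod.unipotentUpper]
  have e2 : biprod.inr ≫ s = d ≫ biprod.inr := by
    ext <;> simp [s, Biprod.unipotentUpper]
  have hxs : x ≫ ι.map s = p₁ ≫ ι.map biprod.inl := by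
    simp only [x, Preadditive.sub_comp, Category.assoc, ← ι.map_comp, e1, e2]
    simp only [Functor.map_add, Functor.map_comp, Preadditive.comp_add]
    rw [← Category.assoc, hb, Category.assoc, add_sub_cancel_right]
  have hxg : x ≫ ι.map g = h' := by
    simp only [x, Preadditive.sub_comp, Category.assoc, ← ι.map_comp, g, biprod.inl_desc, 
      biprod.inr_desc]
    rw [hgA, Functor.map_neg]
    simp
  have : IsIso ((genSubcat B).trW.Q.map (ι.map s)) := Localization.inverts (genSubcat B).trW.Q (genSubcat B).trW _ hs
  have : IsIso ((genSubcat B).trW.Q.map p₁) := Localization.inverts (genSubcat B).trW.Q (genSubcat B).trW _ hp₁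
  refine ⟨A₀ ⊞ P, Q, g, s, hs, inv ((genSubcat B).trW.Q.map (ι.map s)) ≫ (genSubcat B).trW.Q.map (ι.map g), by simp, ?_⟩
  rw [← cancel_epi ((genSubcat B).trW.Q.map p₁), hφ, ← Category.assoc, ← (genSubcat B).trW.Q.map_comp, ← hxs, (genSubcat B).trW.Q.map_comp, 
    Category.assoc, IsIso.hom_inv_id_assoc, ← (genSubcat B).trW.Q.map_comp, hxg]
end

set_option linter.unusedSectionVars false
section
variable {A : Type u} [Category.{v} A] [Preadditive A]

lemma iso_of_two (K L : CochainComplex A ℤ) (hK : ∀ i, i ≠ -1 → i ≠ 0 → IsZero (K.X i))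
    (hL : ∀ i, i ≠ -1 → i ≠ 0 → IsZero (L.X i)) (e1 : K.X (-1) ≅ L.X (-1))
    (e0 : K.X 0 ≅ L.X 0) (h : e1.hom ≫ L.d (-1) 0 = K.d (-1) 0 ≫ e0.hom) :
    Nonempty (K ≅ L) := by
  refine ⟨HomologicalComplex.Hom.isoOfComponents (fun i =>
    if h1 : i = -1 then K.XIsoOfEq h1 ≪≫ e1 ≪≫ (L.XIsoOfEq h1).symm
    else if h0 : i = 0 then K.XIsoOfEq h0 ≪≫ e0 ≪≫ (L.XIsoOfEq h0).symm
    else (hK i h1 h0).iso (hL i h1 h0)) ?_⟩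
  intro i j hij
  simp only [ComplexShape.up_Rel] at hij
  by_cases h1 : i = -1
  · obtain rfl : j = 0 := by omega
    subst h1
    simpa [HomologicalComplex.XIsoOfEq] using h
  · by_cases h0 : i = 0
    · exact (hL j (by omega) (by omega)).eq_of_tgt _ _
    · exact (hK i h1 h0).eq_of_src _ _

variable [HasZeroObject A] [HasFiniteBiproducts A]

lemma twoComplex_isZero {P Q : A} (s : P ⟶ Q) (i : ℤ) (h1 : i ≠ -1) (h0 : i ≠ 0) :
    IsZero ((twoComplex (-1) s).X i) := by
  have : (twoComplex (-1) s).X i = 0 := by simp [twoComplex, h1, h0]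
  rw [this]; exact isZero_zero _

lemma cone_isZero {P Q : A} (s : P ⟶ Q) (i : ℤ) (h1 : i ≠ -1) (h0 : i ≠ 0) :
    IsZero ((CochainComplex.mappingCone
      ((HomologicalComplex.single A (ComplexShape.up ℤ) 0).map s)).X i) := by
  rw [IsZero.iff_id_eq_zero, ← CochainComplex.mappingCone.id_X _ i (i+1) rfl]
  rw [(HomologicalComplex.isZero_single_obj_X (ComplexShape.up ℤ) 0 P (i+1) (by omega)).eq_of_tgt
    ((CochainComplex.mappingCone.fst _).1.v i (i+1) rfl) 0, 
    (HomologicalComplex.isZero_single_obj_X (ComplexShape.up ℤ) 0 Q i h0).eq_of_tgt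
    ((CochainComplex.mappingCone.snd _).v i i (add_zero i)) 0]
  simp

lemma twoComplex_d_eq (n : ℤ) {P Q : A} (f : P ⟶ Q) (i j : ℤ) (h : i = n ∧ j = n + 1) :
    (twoComplex n f).d i j = eqToHom (by simp [twoComplex, h.1]) ≫ f ≫
        eqToHom (by simp [twoComplex, h.2, show ¬ ((n : ℤ) + 1 = n) by omega]) := by
  exact dif_pos h

lemma cone_iso {P Q : A} (s : P ⟶ Q) : Nonempty (CochainComplex.mappingCone
      ((HomologicalComplex.single A (ComplexShape.up ℤ) 0).map s) ≅ twoComplex (-1) s) := by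
  set φ := (HomologicalComplex.single A (ComplexShape.up ℤ) 0).map s with hφ
  let e1 : (CochainComplex.mappingCone φ).X (-1) ≅ 
      ((HomologicalComplex.single A (ComplexShape.up ℤ) 0).obj P).X 0 :=
    { hom := (CochainComplex.mappingCone.fst φ).1.v (-1) 0 (by norm_num)
      inv := (CochainComplex.mappingCone.inl φ).v 0 (-1) (by norm_num)
      hom_inv_id := by
        rw [← CochainComplex.mappingCone.id_X φ (-1) 0 (by norm_num), 
          (HomologicalComplex.isZero_single_obj_X (ComplexShape.up ℤ) 0 Q (-1)
            (by norm_num)).eq_of_tgt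
          ((CochainComplex.mappingCone.snd φ).v (-1) (-1) (add_zero _)) 0]
        simp
      inv_hom_id := by simp }
  let e0 : (CochainComplex.mappingCone φ).X 0 ≅ 
      ((HomologicalComplex.single A (ComplexShape.up ℤ) 0).obj Q).X 0 :=
    { hom := (CochainComplex.mappingCone.snd φ).v 0 0 (by norm_num)
      inv := (CochainComplex.mappingCone.inr φ).f 0
      hom_inv_id := by
        rw [← CochainComplex.mappingCone.id_X φ 0 1 (by norm_num), 
          (HomologicalComplex.isZero_single_obj_X (ComplexShape.up ℤ) 0 P 1
            (by norm_num)).eq_of_tgt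
          ((CochainComplex.mappingCone.fst φ).1.v 0 1 rfl) 0]
        simp
      inv_hom_id := by simp }
  have hd : (twoComplex (-1) s).d (-1) 0 = eqToHom (by simp [twoComplex]) ≫ s ≫ 
      eqToHom (by simp [twoComplex]) := by
    exact twoComplex_d_eq (-1) s (-1) 0 ⟨rfl, by norm_num⟩
  have hX1 : P = (twoComplex (-1) s).X (-1) := by simp [twoComplex]
  have hX0 : Q = (twoComplex (-1) s).X 0 := by simp [twoComplex]
  refine iso_of_two _ _ (cone_isZero s) (twoComplex_isZero s)
    (e1 ≪≫ HomologicalComplex.singleObjXSelf (ComplexShape.up ℤ) 0 P ≪≫ eqToIso hX1)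
    (e0 ≪≫ HomologicalComplex.singleObjXSelf (ComplexShape.up ℤ) 0 Q ≪≫ eqToIso hX0) ?_
  rw [hd]
  have := CochainComplex.mappingCone.d_snd_v φ (-1) 0 (by norm_num)
  simp only [Iso.trans_hom, e1, e0, eqToIso.hom, Category.assoc]
  rw [reassoc_of% this]
  simp [hφ, HomologicalComplex.single_map_f_self]

lemma two_triangle {P Q : A} (s : P ⟶ Q) : ∃ (j : iotaA.obj Q ⟶ homotopyQ.obj (twoComplex (-1) s))
    (q : homotopyQ.obj (twoComplex (-1) s) ⟶ (iotaA.obj P)⟦(1 : ℤ)⟧), 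
    Triangle.mk (iotaA.map s) j q ∈ distTriang (HomotopyCategory A (ComplexShape.up ℤ)) := by
  obtain ⟨e⟩ := cone_iso s
  have hT := HomotopyCategory.mappingCone_triangleh_distinguished
    ((HomologicalComplex.single A (ComplexShape.up ℤ) 0).map s)
  let T := CochainComplex.mappingCone.triangleh
    ((HomologicalComplex.single A (ComplexShape.up ℤ) 0).map s)
  let e' : T.obj₃ ≅ homotopyQ.obj (twoComplex (-1) s) := homotopyQ.mapIso e
  refine ⟨T.mor₂ ≫ e'.hom, e'.inv ≫ T.mor₃, isomorphic_distinguished _ hT _ ?_⟩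
  refine Triangle.isoMk _ _ (Iso.refl _) (Iso.refl _) e'.symm ?_ ?_ ?_
  · exact (Category.comp_id _).trans (Category.id_comp _).symm
  · change (T.mor₂ ≫ e'.hom) ≫ e'.inv = 𝟙 _ ≫ T.mor₂
    simp
  · change (e'.inv ≫ T.mor₃) ≫ _ = e'.inv ≫ T.mor₃
    exact (congrArg (fun z => (e'.inv ≫ T.mor₃) ≫ z)
      ((shiftFunctor (HomotopyCategory A (ComplexShape.up ℤ)) (1 : ℤ)).map_id T.obj₁)).trans
      (Category.comp_id _)

def Supp (a b : ℤ) (X : HomotopyCategory A (ComplexShape.up ℤ)) : Prop :=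
  ∃ K : CochainComplex A ℤ, Nonempty (X ≅ homotopyQ.obj K) ∧ ∀ i, i < a ∨ b < i → IsZero (K.X i)

lemma Supp.shift {a b : ℤ} {X : HomotopyCategory A (ComplexShape.up ℤ)} (h : Supp a b X) (n : ℤ) :
    Supp (a - n) (b - n) (X⟦n⟧) := by
  obtain ⟨K, ⟨e⟩, hK⟩ := h
  refine ⟨K⟦n⟧, ⟨(shiftFunctor _ n).mapIso e ≪≫ (homotopyQ.commShiftIso n).symm.app K⟩, ?_⟩
  intro i hi
  exact hK (i + n) (by omega)

lemma Supp.hom {a b a' b' : ℤ} {X Y : HomotopyCategory A (ComplexShape.up ℤ)} (h : Supp a b X)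
    (h' : Supp a' b' Y) (hd : b < a' ∨ b' < a) (f : X ⟶ Y) : f = 0 := by
  obtain ⟨K, ⟨e⟩, hK⟩ := h
  obtain ⟨L, ⟨e'⟩, hL⟩ := h'
  obtain ⟨g, hg⟩ := homotopyQ.map_surjective (e.inv ≫ f ≫ e'.hom)
  have : g = 0 := by
    ext i
    by_cases hi : i < a ∨ b < i
    · exact (hK i hi).eq_of_src _ _
    · exact (hL i (by omega)).eq_of_tgt _ _
  rw [this, Functor.map_zero] at hg
  have h3 := hg.symm
  rw [Iso.inv_comp_eq, comp_zero, ← Iso.eq_comp_inv, zero_comp] at h3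
  exact h3

lemma supp_iota (P : A) : Supp 0 0 (iotaA.obj P) :=
  ⟨_, ⟨Iso.refl _⟩, fun i hi => HomologicalComplex.isZero_single_obj_X _ _ _ _ (by omega)⟩

lemma supp_two {S : MorphismProperty A} {X} (hX : X ∈ coneSet S) : Supp (-1) 0 X := by
  obtain ⟨P, Q, s, hs, rfl⟩ := hX
  exact ⟨_, ⟨Iso.refl _⟩, fun i hi => twoComplex_isZero s i (by omega) (by omega)⟩

theorem statement10' (S : MorphismProperty A) (A₀ A' : A)
    (f : (uBig S).obj A₀ ⟶ (uBig S).obj A') :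
    ∃ (A'' T : A) (g : A'' ⟶ A') (s : A'' ⟶ A₀ ⊞ T),
      genSub (coneSet S) (homotopyQ.obj (twoComplex (-1) s)) ∧
      IsIso ((uBig S).map s) ∧
      ∃ e : (uBig S).obj (A₀ ⊞ T) ⟶ (uBig S).obj A',
        (uBig S).map s ≫ e = (uBig S).map g ∧
        f = (uBig S).map (biprod.inl : A₀ ⟶ A₀ ⊞ T) ≫ e := by
  obtain ⟨A'', T, g, s, hs, e, he, he'⟩ := main_abs iotaA (coneSet S)
    (fun P Q => (supp_iota P).hom ((supp_iota Q).shift 1) (by omega))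
    (fun P Q => (supp_iota P).hom ((supp_iota Q).shift 2) (by omega))
    (by
      rintro _ ⟨P, Q, s, hs, rfl⟩
      obtain ⟨j, q, h⟩ := two_triangle s
      exact ⟨P, Q, s, j, q, h⟩)
    (fun X hX Y hY l m hlm => ((supp_two hX).shift l).hom ((supp_two hY).shift m) (by omega))
    (fun P X hX m hm => (supp_iota P).hom ((supp_two hX).shift m) (by omega))
    (fun P X hX m hm => ((supp_two hX).shift m).hom ((supp_iota P).shift 1) (by omega))
    A₀ A' f
  refine ⟨A'', T, g, s, ?_, Localization.inverts (genSubcat (coneSet S)).trW.Q _ _ hs, e, he, he'⟩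
  obtain ⟨j, q, h⟩ := two_triangle s
  obtain ⟨Z, j', q', h', hZ⟩ := hs
  obtain ⟨ε, -, -⟩ := exists_iso_of_arrow_iso _ _ h' h (Iso.refl _)
  exact genSub_iso (Triangle.π₃.mapIso ε) hZ
end

end Helpers

/-- Proposition: every morphism `f : A₀ ⟶ A'` of `K^b(A)/𝔻` between objects of `A` can
be presented as `g ∘ s⁻¹ ∘ i`, where `i : A₀ ⟶ A₀ ⊕ T` is the canonical coretraction,
`g, s` are morphisms of `A`, and the cone of `s` is an object of `𝔻`. -/
theorem statement10 {A : Type u} [Category.{v} A] [Preadditive A] [HasZeroObject A]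
    [HasFiniteBiproducts A] (S : MorphismProperty A) (A₀ A' : A)
    (f : (uBig S).obj A₀ ⟶ (uBig S).obj A') :
    ∃ (A'' T : A) (g : A'' ⟶ A') (s : A'' ⟶ A₀ ⊞ T),
      genSub (coneSet S) (homotopyQ.obj (twoComplex (-1) s)) ∧
      IsIso ((uBig S).map s) ∧
      ∃ e : (uBig S).obj (A₀ ⊞ T) ⟶ (uBig S).obj A',
        (uBig S).map s ≫ e = (uBig S).map g ∧
        f = (uBig S).map (biprod.inl : A₀ ⟶ A₀ ⊞ T) ≫ e := by
  exact statement10' S A₀ A' f
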